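/- Let λ, ε, δ > 0, let G be a graph on N vertices with e(G) > 0 which is (λ,B)-stable with respect to (ε,δ) for a family B of subsets of V(G), and let ℓ and t be integers with t > ℓ ≥ ln(1/((1−δ)λ)) · N²/(2δ·e(G)) and ℓ > 0. Then there exists a function P assigning to each ℓ-element set of vertices a subset of V(G), such that for every independent set I of G with |I| = t there exists L ⊆ I with |L| = ℓ, I \ L ⊆ P(L), L ∩ P(L) = ∅, and moreover either |P(L)| ≤ (1−δ)·λ·N, or |P(L) \ B| ≤ ε·λ·N for some B ∈ B. -/

import Mathlib

open MeasureTheory Filter Finset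

noncomputable section

/-- The binomial random subset measure on `V → Bool`: each coordinate is `true`
independently with probability `p`. -/
def bernMeasure (V : Type*) [Fintype V] (p : ℝ) : Measure (V → Bool) :=
  Measure.pi fun _ => (PMF.bernoulli (min (Real.toNNReal p) 1) (min_le_right _ _)).toMeasure

/-- Vertices of the Kneser graph: `k`-element subsets of `[n]`. -/
abbrev KVert (n k : ℕ) := {A : Finset (Fin n) // A.card = k}

/-- The Kneser graph `K(n,k)`. -/
def kneser (n k : ℕ) : SimpleGraph (KVert n k) where
  Adj A B := A ≠ B ∧ Disjoint A.1 B.1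
  symm := ⟨fun A B h => ⟨h.1.symm, h.2.symm⟩⟩
  loopless := ⟨fun A h => h.1 rfl⟩

/-- Total number of edges of a graph. -/
def eTotal {V : Type*} [Fintype V] (G : SimpleGraph V) : ℕ := Nat.card G.edgeSet

/-- Number of edges of `G` with both endpoints in `S`. -/
def eCount {V : Type*} [Fintype V] (G : SimpleGraph V) (S : Finset V) : ℕ :=
  Nat.card (G.induce (S : Set V)).edgeSet

/-- `S` is an independent set of `G`. -/
def IsIndep {V : Type*} (G : SimpleGraph V) (S : Finset V) : Prop :=
  ∀ a ∈ S, ∀ b ∈ S, ¬ G.Adj a b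

/-- Independence number of the subgraph of `G` induced on `{v | ω v = true}`. -/
def alphaSub {V : Type*} [Fintype V] (G : SimpleGraph V) (ω : V → Bool) : ℕ :=
  sSup {m | ∃ S : Finset V, (∀ v ∈ S, ω v = true) ∧ IsIndep G S ∧ S.card = m}

/-- The size of a largest intersecting subfamily of the random hypergraph
determined by `ω`. -/
def maxIntersecting (n k : ℕ) (ω : KVert n k → Bool) : ℕ :=
  sSup {m | ∃ F : Finset (KVert n k), (∀ A ∈ F, ω A = true) ∧
    (∀ A ∈ F, ∀ B ∈ F, (A.1 ∩ B.1).Nonempty) ∧ F.card = m}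

/-- `(λ,γ)`-supersaturation. -/
def Supersaturated {V : Type*} [Fintype V] (G : SimpleGraph V) (lam gam : ℝ) : Prop :=
  ∀ S : Finset V, lam * Fintype.card V ≤ S.card →
    gam * ((S.card : ℝ) / Fintype.card V) ^ 2 * eTotal G ≤ eCount G S

/-- `(λ,B)`-stability with respect to `(ε,δ)`. -/
def StableWrt {V : Type*} [Fintype V] [DecidableEq V] (G : SimpleGraph V) (lam : ℝ)
    (B : Set (Finset V)) (eps del : ℝ) : Prop :=
  ∀ S : Finset V, (1 - del) * lam * Fintype.card V ≤ S.card →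
    (del * ((S.card : ℝ) / Fintype.card V) ^ 2 * eTotal G ≤ eCount G S) ∨
    ∃ b ∈ B, ((S \ b).card : ℝ) ≤ eps * lam * Fintype.card V

end

/-!
The proof is the Kleitman–Winston algorithm. Let `𝒞` be the family of sets allowed as values of `P`.
As long as the set `A` of available vertices is not in `𝒞`, stability makes `A` span many edges, so
some `v ∈ A` has many neighbours in `A`. If `v ∉ I`, discard `v`; if `v ∈ I`, put `v` into the
fingerprint and discard it together with its neighbours, which leaves at most
`exp (-2 * δ * e(G) / N ^ 2) * |A|` vertices. The hypothesis on `ℓ` says that `A` is in `𝒞` once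
this has happened `ℓ` times. The run, and in particular the final `A`, can be reconstructed from the
fingerprint alone.

If `1 ≤ δ`, the logarithm carries no information. Then deleting a vertex of at least average degree
makes the edge density drop below that of `G`, so a single deletion already leads to `𝒞`.
-/

theorem IsIndep.mono {V : Type*} {G : SimpleGraph V} {I J : Finset V} (hJ : IsIndep G J)
    (hIJ : I ⊆ J) : IsIndep G I :=
  fun a ha b hb => hJ a (hIJ ha) b (hIJ hb)

section Fingerprints

variable {V : Type*} [DecidableEq V] {G : SimpleGraph V} {𝒞 : Set (Finset V)} {A : Finset V}
  {k : ℕ}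

/-- Every independent set `I ⊆ A` with at least `k` elements contains a `k`-element fingerprint `L`
which determines, through a map `P` not depending on `I`, a container `P L ∈ 𝒞` of the rest of `I`.
The map `P` is total; only its values on fingerprints matter, and all of them lie inside `A`. -/
def HasFingerprints (G : SimpleGraph V) (𝒞 : Set (Finset V)) (A : Finset V) (k : ℕ) : Prop :=
  ∃ P : Finset V → Finset V, (∀ L, P L ⊆ A) ∧
    ∀ I ⊆ A, IsIndep G I → k ≤ #I →
      ∃ L ⊆ I, #L = k ∧ I \ L ⊆ P L ∧ L ∩ P L = ∅ ∧ P L ∈ 𝒞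

theorem hasFingerprints_of_mem (h𝒞 : IsLowerSet 𝒞) (hA : A ∈ 𝒞) : HasFingerprints G 𝒞 A k := by
  refine ⟨fun L => A \ L, fun L => sdiff_subset, fun I hIA _ hkI => ?_⟩
  obtain ⟨L, hLI, hLk⟩ := exists_subset_card_eq hkI
  exact ⟨L, hLI, hLk, sdiff_subset_sdiff hIA subset_rfl, inter_sdiff_self _ _,
    h𝒞 sdiff_subset hA⟩

variable [DecidableRel G.Adj]

theorem HasFingerprints.of_erase_of_filter_not_adj {v : V}
    (hout : HasFingerprints G 𝒞 (A.erase v) (k + 1))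
    (hin : HasFingerprints G 𝒞 {w ∈ A.erase v | ¬ G.Adj v w} k) :
    HasFingerprints G 𝒞 A (k + 1) := by
  obtain ⟨Pout, hPout, hout⟩ := hout
  obtain ⟨Pin, hPin, hin⟩ := hin
  refine ⟨fun L => if v ∈ L then Pin (L.erase v) else Pout L, fun L => ?_,
    fun I hIA hI hkI => ?_⟩
  · dsimp only
    split_ifs
    · exact (hPin _).trans ((filter_subset _ _).trans (erase_subset _ _))
    · exact (hPout _).trans (erase_subset _ _)
  by_cases hvI : v ∈ I
  · have hIv : I.erase v ⊆ {w ∈ A.erase v | ¬ G.Adj v w} := fun w hw =>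
      mem_filter.2 ⟨erase_subset_erase v hIA hw, hI v hvI w (mem_of_mem_erase hw)⟩
    obtain ⟨L, hLI, hLk, hcover, hdisj, hmem⟩ := hin (I.erase v) hIv
      (hI.mono (erase_subset v I)) (by rw [card_erase_of_mem hvI]; omega)
    have hvL : v ∉ L := fun h => notMem_erase v I (hLI h)
    have hvP : v ∉ Pin L := fun h => notMem_erase v A (mem_filter.1 (hPin L h)).1
    refine ⟨insert v L, insert_subset hvI (hLI.trans (erase_subset v I)),
      by rw [card_insert_of_notMem hvL, hLk], ?_⟩
    simp only [mem_insert_self, if_true, erase_insert hvL]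
    exact ⟨by rwa [sdiff_insert, ← erase_sdiff_comm],
      by rwa [insert_inter_of_notMem hvP], hmem⟩
  · obtain ⟨L, hLI, hLk, hL⟩ := hout I (subset_erase.2 ⟨hIA, hvI⟩) hI hkI
    refine ⟨L, hLI, hLk, ?_⟩
    have hvL : v ∉ L := fun h => hvI (hLI h)
    simpa only [hvL, if_false] using hL

theorem hasFingerprints_of_pow_mul_card_le (h𝒞 : IsLowerSet 𝒞) {c q : ℝ} (hq : 0 ≤ q)
    (hsmall : ∀ S : Finset V, (#S : ℝ) ≤ c → S ∈ 𝒞)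
    (hshrink : ∀ S ∉ 𝒞, ∃ v ∈ S, (#{w ∈ S.erase v | ¬ G.Adj v w} : ℝ) ≤ q * #S)
    (hA : q ^ k * #A ≤ c) : HasFingerprints G 𝒞 A k := by
  induction A using Finset.strongInduction generalizing k with
  | H A ih =>
    by_cases hmem : A ∈ 𝒞
    · exact hasFingerprints_of_mem h𝒞 hmem
    obtain ⟨v, hv, hcard⟩ := hshrink A hmem
    have herase : A.erase v ⊂ A := erase_ssubset hv
    cases k with
    | zero => exact absurd (hsmall A (by simpa using hA)) hmem
    | succ k =>
      refine .of_erase_of_filter_not_adj (ih _ herase ?_)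
        (ih _ ((filter_subset _ _).trans_ssubset herase) ?_)
      · refine le_trans ?_ hA
        gcongr
      · calc q ^ k * #{w ∈ A.erase v | ¬ G.Adj v w}
            ≤ q ^ k * (q * #A) := by gcongr
          _ = q ^ (k + 1) * #A := by ring
          _ ≤ c := hA

end Fingerprints

section Degrees

variable {V : Type*} (G : SimpleGraph V)

theorem degree_induce_eq_card_filter [DecidableRel G.Adj] (A : Finset V) (v : (A : Set V)) :
    (G.induce (A : Set V)).degree v = #{w ∈ A | G.Adj v w} := by
  rw [← SimpleGraph.card_neighborFinset_eq_degree, ← card_map (.subtype (· ∈ (A : Set V)))]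
  congr 1
  ext w
  simp [and_comm]

variable [Fintype V]

theorem nonempty_of_eTotal_pos (hE : 0 < eTotal G) : Nonempty V := by
  obtain ⟨e, -⟩ := (Nat.card_pos_iff.1 hE).1
  exact ⟨e.out.1⟩

variable [DecidableRel G.Adj]

theorem eTotal_eq_card_edgeFinset : eTotal G = #G.edgeFinset := by
  rw [eTotal, Nat.card_eq_fintype_card, SimpleGraph.edgeFinset_card]

theorem exists_two_mul_eTotal_le [Nonempty V] :
    ∃ v, 2 * eTotal G ≤ Fintype.card V * G.degree v := by
  obtain ⟨v, hv⟩ := G.exists_maximal_degree_vertex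
  refine ⟨v, ?_⟩
  rw [eTotal_eq_card_edgeFinset, ← G.sum_degrees_eq_twice_card_edges, ← smul_eq_mul]
  exact sum_le_card_nsmul _ _ _ fun w _ => hv ▸ G.degree_le_maxDegree w

variable [DecidableEq V]

theorem exists_card_mul_card_filter_not_adj_add_le {A : Finset V} (hA : A.Nonempty) :
    ∃ v ∈ A, #A * #{w ∈ A.erase v | ¬ G.Adj v w} + 2 * eCount G A ≤ #A ^ 2 := by
  have : Nonempty (A : Set V) := hA.coe_sort
  have hcard : Fintype.card (A : Set V) = #A := Fintype.card_coe A
  obtain ⟨v, hv⟩ : ∃ v : (A : Set V),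
      2 * eCount G A ≤ Fintype.card (A : Set V) * (G.induce (A : Set V)).degree v :=
    exists_two_mul_eTotal_le _
  rw [degree_induce_eq_card_filter, hcard] at hv
  refine ⟨v, v.2, ?_⟩
  calc #A * #{w ∈ A.erase v | ¬ G.Adj v w} + 2 * eCount G A
      ≤ #A * #{w ∈ A | ¬ G.Adj v w} + #A * #{w ∈ A | G.Adj v w} := by
        gcongr
        exact erase_subset _ _
    _ = #A ^ 2 := by
        rw [← mul_add, add_comm, card_filter_add_card_filter_not, sq]

theorem eCount_univ_erase_add_degree (v : V) :
    eCount G (univ.erase v) + G.degree v = eTotal G := by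
  have hle : G.degree v ≤ #G.edgeFinset := G.degree_le_card_edgeFinset v
  have hcompl : (↑(univ.erase v) : Set V) = {v}ᶜ := by simp [Set.compl_eq_univ_sdiff]
  rw [eCount, hcompl, Nat.card_eq_fintype_card, ← SimpleGraph.edgeFinset_card,
    SimpleGraph.card_edgeFinset_induce_compl_singleton,
    SimpleGraph.card_edgeFinset_deleteIncidenceSet, Nat.sub_add_cancel hle,
    eTotal_eq_card_edgeFinset]

end Degrees

theorem exists_eCount_univ_erase_lt {V : Type*} [Fintype V] [DecidableEq V] (G : SimpleGraph V)
    (hE : 0 < eTotal G) :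
    ∃ v : V, (eCount G (univ.erase v) : ℝ) <
      ((#(univ.erase v) : ℝ) / Fintype.card V) ^ 2 * eTotal G := by
  classical
  have := nonempty_of_eTotal_pos G hE
  obtain ⟨v, hdeg⟩ := exists_two_mul_eTotal_le G
  refine ⟨v, ?_⟩
  have hN : (0 : ℝ) < Fintype.card V := mod_cast Fintype.card_pos
  have hcard : (#(univ.erase v) : ℝ) = Fintype.card V - 1 := by
    rw [cast_card_erase_of_mem (mem_univ v), card_univ]
  have hdelete : (eCount G (univ.erase v) : ℝ) + G.degree v = eTotal G :=
    mod_cast eCount_univ_erase_add_degree G v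
  have havg : 2 * eTotal G / (Fintype.card V : ℝ) ≤ G.degree v := by
    rw [div_le_iff₀' hN]
    exact_mod_cast hdeg
  calc (eCount G (univ.erase v) : ℝ)
      ≤ eTotal G - 2 * eTotal G / Fintype.card V := by linarith
    _ < eTotal G - 2 * eTotal G / Fintype.card V + eTotal G / (Fintype.card V : ℝ) ^ 2 :=
        lt_add_of_pos_right _ (by positivity)
    _ = ((#(univ.erase v) : ℝ) / Fintype.card V) ^ 2 * eTotal G := by
        rw [hcard]
        field_simp
        ring

theorem exp_neg_pow_le_of_log_div_le {x β : ℝ} (hx : 0 < x) (hβ : 0 < β) {ℓ : ℕ}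
    (hℓ : Real.log (1 / β) / x ≤ ℓ) : Real.exp (-x) ^ ℓ ≤ β := by
  rw [one_div, Real.log_inv, div_le_iff₀ hx] at hℓ
  rw [← Real.exp_nat_mul, ← Real.le_log_iff_exp_le hβ]
  linarith

section Stability

variable {V : Type*} [DecidableEq V]

/-- The sets with at most `c` elements, or with at most `r` elements outside some member of `B`:
the admissible containers of a stable graph. -/
def smallOrClose (B : Set (Finset V)) (c r : ℝ) : Set (Finset V) :=
  {S | (#S : ℝ) ≤ c ∨ ∃ b ∈ B, (#(S \ b) : ℝ) ≤ r}

theorem isLowerSet_smallOrClose (B : Set (Finset V)) (c r : ℝ) :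
    IsLowerSet (smallOrClose B c r) := by
  rintro T S hST (hT | ⟨b, hb, hT⟩)
  · exact Or.inl (le_trans (mod_cast card_le_card hST) hT)
  · exact Or.inr ⟨b, hb, le_trans (mod_cast card_le_card (sdiff_subset_sdiff hST subset_rfl)) hT⟩

variable [Fintype V] {G : SimpleGraph V} {lam ε δ : ℝ} {B : Set (Finset V)}

theorem StableWrt.le_eCount_of_notMem (hstab : StableWrt G lam B ε δ) {S : Finset V}
    (hS : S ∉ smallOrClose B ((1 - δ) * lam * Fintype.card V) (ε * lam * Fintype.card V)) :
    δ * ((#S : ℝ) / Fintype.card V) ^ 2 * eTotal G ≤ eCount G S := by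
  obtain ⟨hlarge, hfar⟩ := not_or.1 hS
  exact (hstab S (not_le.1 hlarge).le).resolve_right hfar

theorem StableWrt.exists_card_filter_not_adj_le [DecidableRel G.Adj]
    (hstab : StableWrt G lam B ε δ) (hβ : 0 ≤ (1 - δ) * lam) {S : Finset V}
    (hS : S ∉ smallOrClose B ((1 - δ) * lam * Fintype.card V) (ε * lam * Fintype.card V)) :
    ∃ v ∈ S, (#{w ∈ S.erase v | ¬ G.Adj v w} : ℝ) ≤
      Real.exp (-(2 * δ * eTotal G / (Fintype.card V : ℝ) ^ 2)) * #S := by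
  have hcard : (0 : ℝ) < #S :=
    (mul_nonneg hβ (Nat.cast_nonneg _)).trans_lt (not_le.1 (not_or.1 hS).1)
  obtain ⟨v, hv, hdeg⟩ :=
    exists_card_mul_card_filter_not_adj_add_le G (card_pos.1 (mod_cast hcard))
  refine ⟨v, hv, le_of_mul_le_mul_left ?_ hcard⟩
  have hdeg' : (#S : ℝ) * #{w ∈ S.erase v | ¬ G.Adj v w} + 2 * eCount G S ≤ (#S : ℝ) ^ 2 :=
    mod_cast hdeg
  set x : ℝ := 2 * δ * eTotal G / (Fintype.card V : ℝ) ^ 2 with hx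
  calc (#S : ℝ) * #{w ∈ S.erase v | ¬ G.Adj v w}
      ≤ (#S : ℝ) ^ 2 - 2 * (δ * ((#S : ℝ) / Fintype.card V) ^ 2 * eTotal G) := by
        linarith [hstab.le_eCount_of_notMem hS]
    _ = #S * ((1 - x) * #S) := by rw [hx]; ring
    _ ≤ #S * (Real.exp (-x) * #S) := by
        gcongr
        exact Real.one_sub_le_exp_neg x

theorem StableWrt.hasFingerprints_of_lt_one (hstab : StableWrt G lam B ε δ) (hlam : 0 < lam)
    (hδ : 0 < δ) (hδ1 : δ < 1) (hE : 0 < eTotal G) {ℓ : ℕ}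
    (hℓ : Real.log (1 / ((1 - δ) * lam)) * (Fintype.card V : ℝ) ^ 2 /
        (2 * δ * eTotal G) ≤ ℓ) :
    HasFingerprints G
      (smallOrClose B ((1 - δ) * lam * Fintype.card V) (ε * lam * Fintype.card V)) univ ℓ := by
  classical
  have := nonempty_of_eTotal_pos G hE
  have hβ : 0 < (1 - δ) * lam := mul_pos (sub_pos.2 hδ1) hlam
  rw [← div_div_eq_mul_div] at hℓ
  refine hasFingerprints_of_pow_mul_card_le (isLowerSet_smallOrClose B _ _) (Real.exp_nonneg _)
    (fun S hS => Or.inl hS) (fun S hS => hstab.exists_card_filter_not_adj_le hβ.le hS) ?_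
  rw [card_univ]
  gcongr
  exact exp_neg_pow_le_of_log_div_le (by positivity) hβ hℓ

theorem StableWrt.exists_univ_erase_mem_of_one_le (hstab : StableWrt G lam B ε δ) (hδ1 : 1 ≤ δ)
    (hE : 0 < eTotal G) :
    ∃ v : V, univ.erase v ∈
      smallOrClose B ((1 - δ) * lam * Fintype.card V) (ε * lam * Fintype.card V) := by
  obtain ⟨v, hv⟩ := exists_eCount_univ_erase_lt G hE
  refine ⟨v, by_contra fun hmem => (hv.trans_le ?_).false⟩
  refine le_trans ?_ (hstab.le_eCount_of_notMem hmem)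
  rw [mul_assoc]
  exact le_mul_of_one_le_left (by positivity) hδ1

theorem StableWrt.hasFingerprints_of_one_le (hstab : StableWrt G lam B ε δ) (hδ1 : 1 ≤ δ)
    (hE : 0 < eTotal G) {ℓ : ℕ} (hℓ0 : 0 < ℓ) :
    HasFingerprints G
      (smallOrClose B ((1 - δ) * lam * Fintype.card V) (ε * lam * Fintype.card V)) univ ℓ := by
  classical
  obtain ⟨v, hv⟩ := hstab.exists_univ_erase_mem_of_one_le hδ1 hE
  obtain ⟨k, rfl⟩ := Nat.exists_eq_add_one.2 hℓ0
  have hlower := isLowerSet_smallOrClose B ((1 - δ) * lam * Fintype.card V)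
    (ε * lam * Fintype.card V)
  exact .of_erase_of_filter_not_adj (hasFingerprints_of_mem hlower hv)
    (hasFingerprints_of_mem hlower (hlower (filter_subset _ _) hv))

end Stability

/-- fingerprint corollary for stable graphs. -/
theorem fingerprint_stability {V : Type*} [Fintype V] [DecidableEq V]
    (G : SimpleGraph V) (lam ε δ : ℝ) (hlam : 0 < lam) (hε : 0 < ε) (hδ : 0 < δ)
    (B : Set (Finset V)) (hstab : StableWrt G lam B ε δ)
    (hE : 0 < eTotal G) (ℓ t : ℕ) (hℓ0 : 0 < ℓ)
    (hℓ : Real.log (1 / ((1 - δ) * lam)) * (Fintype.card V : ℝ) ^ 2 /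
        (2 * δ * eTotal G) ≤ ℓ)
    (hℓt : ℓ < t) :
    ∃ P : Finset V → Finset V,
      ∀ I : Finset V, IsIndep G I → I.card = t →
        ∃ L : Finset V, L ⊆ I ∧ L.card = ℓ ∧ I \ L ⊆ P L ∧ L ∩ P L = ∅ ∧
          (((P L).card : ℝ) ≤ (1 - δ) * lam * Fintype.card V ∨
           ∃ b ∈ B, ((P L \ b).card : ℝ) ≤ ε * lam * Fintype.card V) := by
  have hfingerprints : HasFingerprints G
      (smallOrClose B ((1 - δ) * lam * Fintype.card V) (ε * lam * Fintype.card V)) univ ℓ := by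
    rcases lt_or_ge δ 1 with hδ1 | hδ1
    · exact hstab.hasFingerprints_of_lt_one hlam hδ hδ1 hE hℓ
    · exact hstab.hasFingerprints_of_one_le hδ1 hE hℓ0
  obtain ⟨P, -, hP⟩ := hfingerprints
  exact ⟨P, fun I hI hIt => hP I (subset_univ I) hI (hIt ▸ hℓt.le)⟩
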